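/- Theorem 8: For the quaternary sequences u₆ = φ[s₁, s₃+1], u₈ = φ[s₃, s₄+1], u₁₄ = φ[s₁+1, s₃+1] of period p, the 4-adic complexity satisfies Φ₄(u_i) ≥ ⌊log₄((4^p − 1)/((1+2p)(1+6p)(1+8p)) + 1)⌋ for i = 6, 8, 14. -/

import Mathlib

open Finset

/-- The cyclotomic class `D_i` of order 4 modulo `p` with respect to the
primitive root `θ`: `{θ^(i+4j) mod p : 0 ≤ j < (p-1)/4}`. -/
def cycD (p θ i : ℕ) : Finset ℕ :=
  (Finset.range ((p - 1) / 4)).image fun j => θ ^ (i + 4 * j) % p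

/-- The binary sequence `s₁` with support set `D₀ ∪ D₁`. -/
def seqS1 (p θ : ℕ) (t : ℕ) : ℕ := if t ∈ cycD p θ 0 ∪ cycD p θ 1 then 1 else 0

/-- The binary sequence `s₂` with support set `D₀ ∪ D₃`. -/
def seqS2 (p θ : ℕ) (t : ℕ) : ℕ := if t ∈ cycD p θ 0 ∪ cycD p θ 3 then 1 else 0

/-- The binary sequence `s₃` with support set `D₁ ∪ D₂`. -/
def seqS3 (p θ : ℕ) (t : ℕ) : ℕ := if t ∈ cycD p θ 1 ∪ cycD p θ 2 then 1 else 0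

/-- The binary sequence `s₄` with support set `D₂ ∪ D₃`. -/
def seqS4 (p θ : ℕ) (t : ℕ) : ℕ := if t ∈ cycD p θ 2 ∪ cycD p θ 3 then 1 else 0

/-- The bitwise complement `s + 1` of a binary sequence. -/
def seqCompl (s : ℕ → ℕ) (t : ℕ) : ℕ := 1 - s t

/-- The inverse Gray mapping: `φ[0,0]=0, φ[0,1]=1, φ[1,1]=2, φ[1,0]=3`. -/
def gray (a b : ℕ) : ℕ := if a = 0 then b else 3 - b

/-- The quaternary sequence `φ[r,s] : t ↦ φ[r(t), s(t)]`. -/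
def graySeq (r s : ℕ → ℕ) (t : ℕ) : ℕ := gray (r t) (s t)

/-- The generating value `U(4) = Σ_{t=0}^{p-1} u(t)·4^t` of a quaternary
sequence `u` of period `p`. -/
def seqVal (p : ℕ) (u : ℕ → ℕ) : ℕ := ∑ t ∈ Finset.range p, u t * 4 ^ t

/-- The 4-adic complexity `Φ₄(u) = ⌊log₄((4^p − 1)/gcd(4^p − 1, U(4)) + 1)⌋`
of a quaternary sequence `u` of period `p`. -/
noncomputable def adicComplexity4 (p : ℕ) (u : ℕ → ℕ) : ℤ :=
  ⌊Real.logb 4 (((4 ^ p - 1 : ℕ) : ℝ) / ((Nat.gcd (4 ^ p - 1) (seqVal p u) : ℕ) : ℝ) + 1)⌋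

/- Let `g = gcd(4^p - 1, U(4))`. Modulo `g` the number `4` is a `p`-th root of unity, so `t ↦ 4^t`
is an additive character of `ZMod p`, and its sum over `ZMod p` vanishes because `g` is prime to
`3`. Let `χ` be the quadratic character and `C` its Gauss sum, let `f(t) = (-1)^r(t)` be the sign
sequence of the first component of `u = φ[r,s]` and `E` its exponential sum. The inverse Gray
mapping and `(-1)^(r(t) + s(t)) = ±χ(t)` turn `U(4) = 0` into the linear relation `2E ± C ± 1 = 0`.

Since `f` is multiplied by `χ(c)` when its argument is scaled by `c²`, the convolution `f * f` is
invariant under multiplication by squares, so it is a combination of `1`, `δ₀` and `χ`. For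
`p ≡ 5 (mod 8)` this gives `E² = b C - p` with an integer `b`, along with `C² = p`. Squaring the
linear relation yields `k C = 1 + 5p`, hence `p k² ≡ (1 + 5p)² (mod g)` with `|k| ≤ 4p + 6`. The
integer `(1 + 5p)² - p k²` is `1` modulo `p`, so it is not zero, and `g` is at most its absolute
value. -/

section Convolution

variable {G R : Type*} [AddCommGroup G] [Fintype G] [CommRing R]

/-- The additive self-convolution `f * f` on a finite abelian group. -/
def selfConv (f : G → ℤ) (s : G) : ℤ := ∑ t, f t * f (s - t)

/-- The exponential sum `∑ f(t) ψ(t)` of an integer-valued function `f` against an additive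
character `ψ`; for a multiplicative character `f` it is a Gauss sum. The values of `ψ` lie in an
arbitrary commutative ring, since it is applied to `ZMod g` with `g` composite. -/
def charSum (f : G → ℤ) (ψ : AddChar G R) : R := ∑ t, (f t : R) * ψ t

lemma charSum_one (f : G → ℤ) : charSum f (1 : AddChar G R) = (∑ t, f t : ℤ) := by
  simp only [charSum, AddChar.one_apply, mul_one, Int.cast_sum]

lemma charSum_sq (f : G → ℤ) (ψ : AddChar G R) : charSum f ψ ^ 2 = charSum (selfConv f) ψ := by
  simp only [charSum, selfConv, Int.cast_sum, Finset.sum_mul]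
  rw [Finset.sum_comm, sq, Finset.sum_mul]
  refine Finset.sum_congr rfl fun t _ => ?_
  rw [Finset.mul_sum, ← (Equiv.subRight t).sum_comp]
  refine Finset.sum_congr rfl fun s _ => ?_
  have hs : ψ s = ψ t * ψ (s - t) := by rw [← AddChar.map_add_eq_mul, add_sub_cancel]
  rw [Equiv.subRight_apply, hs]
  push_cast
  ring

lemma sum_selfConv (f : G → ℤ) : ∑ s, selfConv f s = (∑ t, f t) ^ 2 := by
  simpa only [charSum_one, Int.cast_id] using (charSum_sq f (1 : AddChar G ℤ)).symm

lemma abs_selfConv_le {f : G → ℤ} (hf : ∀ t, |f t| ≤ 1) (s : G) :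
    |selfConv f s| ≤ Fintype.card G :=
  calc |selfConv f s| ≤ ∑ t, |f t * f (s - t)| := Finset.abs_sum_le_sum_abs _ _
    _ ≤ ∑ _t : G, 1 := Finset.sum_le_sum fun t _ => by
      rw [abs_mul]
      exact mul_le_one₀ (hf _) (abs_nonneg _) (hf _)
    _ = Fintype.card G := by simp

lemma sum_addChar_eq_zero_of_isUnit_sub_one {ψ : AddChar G R} {a : G} (ha : IsUnit (ψ a - 1)) :
    ∑ t, ψ t = 0 := by
  have hshift : ∑ t, ψ t = ψ a * ∑ t, ψ t := by
    rw [Finset.mul_sum, ← Equiv.sum_comp (Equiv.addLeft a)]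
    simp only [Equiv.coe_addLeft, AddChar.map_add_eq_mul]
  exact ha.mul_right_eq_zero.1 (by linear_combination -hshift)

end Convolution

section FiniteField

variable {F R : Type*} [Field F] [CommRing R]

/-- A function `f : F → {0, ±1}` vanishing only at `0` that transforms under multiplication by
squares through the multiplicative character `ρ`. The quadratic character is the case `ρ = 1`; for
`ρ` the quadratic character these are the functions that are constant on the cosets of the fourth
powers, with opposite signs on `D₀`, `D₂` and on `D₁`, `D₃`. As `ρ 0 = 0`, the equivariance at
`c = 0` encodes `f 0 = 0`. -/
structure IsEquivariantSign (ρ : MulChar F ℤ) (f : F → ℤ) : Prop where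
  sq_eq_one : ∀ t, t ≠ 0 → f t ^ 2 = 1
  map_sq_mul : ∀ c t, f (c ^ 2 * t) = ρ c * f t

namespace IsEquivariantSign

variable {ρ : MulChar F ℤ} {f : F → ℤ}

lemma map_zero (hf : IsEquivariantSign ρ f) : f 0 = 0 := by
  simpa [ρ.map_zero] using hf.map_sq_mul 0 0

lemma neg (hf : IsEquivariantSign ρ f) : IsEquivariantSign ρ (-f) where
  sq_eq_one t ht := by rw [Pi.neg_apply, neg_sq, hf.sq_eq_one t ht]
  map_sq_mul c t := by rw [Pi.neg_apply, Pi.neg_apply, hf.map_sq_mul, mul_neg]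

lemma abs_le_one (hf : IsEquivariantSign ρ f) (t : F) : |f t| ≤ 1 := by
  rcases eq_or_ne t 0 with rfl | ht
  · simp [hf.map_zero]
  · exact (sq_le_one_iff_abs_le_one _).1 (hf.sq_eq_one t ht).le

lemma char_sq_eq_one (hf : IsEquivariantSign ρ f) {c : F} (hc : c ≠ 0) : ρ c ^ 2 = 1 := by
  have h := hf.sq_eq_one (c ^ 2 * 1) (by simpa using hc)
  rwa [hf.map_sq_mul, mul_pow, hf.sq_eq_one 1 one_ne_zero, mul_one] at h

end IsEquivariantSign

variable [Fintype F]

lemma selfConv_mul {f : F → ℤ} {c : F} (hc : c ≠ 0) {ε : ℤ} (hε : ε ^ 2 = 1)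
    (hf : ∀ t, f (c * t) = ε * f t) (s : F) : selfConv f (c * s) = selfConv f s := by
  unfold selfConv
  rw [← Equiv.sum_comp (Equiv.mulLeft₀ c hc)]
  refine Finset.sum_congr rfl fun t _ => ?_
  rw [Equiv.mulLeft₀_apply, ← mul_sub, hf, hf]
  linear_combination f t * f (s - t) * hε

lemma two_mul_eq_of_map_sq_mul [DecidableEq F] {h : F → ℤ} {n : F}
    (hsq : ∀ c, c ≠ 0 → ∀ s, h (c ^ 2 * s) = h s) (hn : quadraticChar F n = -1) {s : F}
    (hs : s ≠ 0) : 2 * h s = h 1 + h n + (h 1 - h n) * quadraticChar F s := by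
  have hn0 : n ≠ 0 := fun h0 => by simp [h0] at hn
  rcases quadraticChar_dichotomy hs with hχ | hχ
  · obtain ⟨c, rfl⟩ := (quadraticChar_one_iff_isSquare hs).1 hχ
    have hc : h (c * c) = h 1 := by simpa [sq] using hsq c (left_ne_zero_of_mul hs) 1
    rw [hχ, hc]
    ring
  · obtain ⟨c, hc⟩ := (quadraticChar_one_iff_isSquare (mul_ne_zero hs hn0)).1
      (by rw [map_mul, hχ, hn]; rfl)
    have hc0 : c ≠ 0 := left_ne_zero_of_mul (hc ▸ mul_ne_zero hs hn0)
    have hsn : (c / n) ^ 2 * n = s := by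
      field_simp
      linear_combination -hc
    rw [hχ, ← hsn, hsq _ (div_ne_zero hc0 hn0)]
    ring

lemma eq_of_map_sq_mul_of_sum_eq_zero [DecidableEq F] (hF : ringChar F ≠ 2) {h : F → ℤ} {ε : ℤ}
    (hsq : ∀ c, c ≠ 0 → ∀ s, h (c ^ 2 * s) = h s) (hsum : ∑ s, h s = 0)
    (h0 : h 0 = ε * (Fintype.card F - 1)) (s : F) :
    h s = (h 1 + ε) * quadraticChar F s - ε + if s = 0 then ε * (Fintype.card F : ℤ) else 0 := by
  obtain ⟨n, hn⟩ := quadraticChar_exists_neg_one hF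
  have htwo : ∀ s, 2 * h s = (h 1 + h n) + (h 1 - h n) * quadraticChar F s
      + if s = 0 then 2 * h 0 - (h 1 + h n) else 0 := by
    intro s
    split_ifs with hs
    · simp [hs]
    · rw [two_mul_eq_of_map_sq_mul hsq hn hs, add_zero]
  have hsum_two : ∑ s, 2 * h s = 0 := by rw [← Finset.mul_sum, hsum, mul_zero]
  rw [Finset.sum_congr rfl fun s _ => htwo s] at hsum_two
  simp only [Finset.sum_add_distrib, ← Finset.mul_sum, quadraticChar_sum_zero hF,
    Finset.sum_const, Finset.card_univ, Finset.sum_ite_eq', Finset.mem_univ, if_true,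
    nsmul_eq_mul] at hsum_two
  have hcard : (Fintype.card F : ℤ) - 1 ≠ 0 :=
    sub_ne_zero.2 (by exact_mod_cast Fintype.one_lt_card.ne')
  have hhn : h 1 + h n = -2 * ε :=
    mul_left_cancel₀ hcard (by linear_combination hsum_two - 2 * h0)
  split_ifs with hs
  · rw [hs, h0, MulChar.map_zero]
    ring
  · refine mul_left_cancel₀ two_ne_zero ((htwo s).trans ?_)
    rw [if_neg hs]
    linear_combination (1 - quadraticChar F s) * hhn

namespace IsEquivariantSign

variable {ρ : MulChar F ℤ} {f : F → ℤ} {i : F}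

lemma selfConv_zero (hf : IsEquivariantSign ρ f) (hi : i ^ 2 = -1) :
    selfConv f 0 = ρ i * (Fintype.card F - 1) := by
  classical
  have hterm : ∀ t, f t * f (0 - t) = ρ i - if t = 0 then ρ i else 0 := by
    intro t
    rw [zero_sub, ← neg_one_mul, ← hi, hf.map_sq_mul]
    split_ifs with ht
    · simp [ht, hf.map_zero]
    · linear_combination ρ i * hf.sq_eq_one t ht
  simp only [selfConv, hterm, Finset.sum_sub_distrib, Finset.sum_const, Finset.card_univ,
    Finset.sum_ite_eq', Finset.mem_univ, if_true, nsmul_eq_mul]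
  ring

lemma charSum_sq_eq [DecidableEq F] (hf : IsEquivariantSign ρ f) (hF : ringChar F ≠ 2)
    (hi : i ^ 2 = -1) (hsum : ∑ t, f t = 0) {ψ : AddChar F R} (hψ : ∑ t, ψ t = 0) :
    charSum f ψ ^ 2 =
      ρ i * Fintype.card F + (selfConv f 1 + ρ i) * charSum (quadraticChar F) ψ := by
  have hconv := eq_of_map_sq_mul_of_sum_eq_zero hF
    (fun c hc => selfConv_mul (pow_ne_zero 2 hc) (hf.char_sq_eq_one hc) (hf.map_sq_mul c))
    (by rw [sum_selfConv, hsum, sq, mul_zero]) (hf.selfConv_zero hi)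
  have hterm : ∀ s, (selfConv f s : R) * ψ s
      = (selfConv f 1 + ρ i) * (quadraticChar F s * ψ s) - ρ i * ψ s
        + if s = 0 then (ρ i * Fintype.card F : R) * ψ s else 0 := by
    intro s
    rw [hconv s]
    split_ifs <;> push_cast <;> ring
  rw [charSum_sq, charSum, charSum, Finset.sum_congr rfl fun s _ => hterm s,
    Finset.sum_add_distrib, Finset.sum_sub_distrib, ← Finset.mul_sum, ← Finset.mul_sum, hψ,
    Finset.sum_ite_eq', if_pos (Finset.mem_univ _), AddChar.map_zero_eq_one]
  ring

lemma sum_eq_zero [DecidableEq F] (hf : IsEquivariantSign (quadraticChar F) f)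
    (hF : ringChar F ≠ 2) : ∑ t, f t = 0 := by
  obtain ⟨n, hn⟩ := quadraticChar_exists_neg_one hF
  have hn0 : n ≠ 0 := fun h0 => by simp [h0] at hn
  have hneg := Equiv.sum_comp (Equiv.mulLeft₀ (n ^ 2) (pow_ne_zero 2 hn0)) f
  simp only [Equiv.mulLeft₀_apply, hf.map_sq_mul, hn, neg_one_mul, Finset.sum_neg_distrib] at hneg
  linarith

end IsEquivariantSign

lemma ringChar_ne_two_of_card_mod_eight (hq : Fintype.card F % 8 = 5) : ringChar F ≠ 2 := by
  intro h
  have := FiniteField.even_card_iff_char_two.1 h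
  omega

lemma exists_sq_eq_neg_one_of_card_mod_eight (hq : Fintype.card F % 8 = 5) :
    ∃ i : F, i ^ 2 = -1 := by
  obtain ⟨i, hi⟩ := FiniteField.isSquare_neg_one_iff.2 (by omega : Fintype.card F % 4 ≠ 3)
  exact ⟨i, by rw [hi, sq]⟩

/-- The coefficient `k` of the relation `k C = 1 + 5q` satisfied by the quadratic Gauss sum `C`
whenever the exponential sum `E` of `f` satisfies `2 E + σ C + τ = 0`. -/
def gaussCoeff (f : F → ℤ) (σ τ : ℤ) : ℤ := 4 * (selfConv f 1 - 1) - 2 * σ * τ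

lemma IsEquivariantSign.abs_gaussCoeff_le {ρ : MulChar F ℤ} {f : F → ℤ}
    (hf : IsEquivariantSign ρ f) {σ τ : ℤ} (hσ : σ ^ 2 = 1) (hτ : τ ^ 2 = 1) :
    |gaussCoeff f σ τ| ≤ 4 * Fintype.card F + 6 := by
  have hconv := abs_le.1 (abs_selfConv_le hf.abs_le_one 1)
  have hστ := abs_le.1 ((sq_le_one_iff_abs_le_one (σ * τ)).1 (by rw [mul_pow, hσ, hτ, one_mul]))
  rw [gaussCoeff, abs_le]
  constructor <;> linarith [hconv.1, hconv.2, hστ.1, hστ.2]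

variable [DecidableEq F]

lemma isEquivariantSign_quadraticChar : IsEquivariantSign 1 (quadraticChar F) where
  sq_eq_one _ := quadraticChar_sq_one
  map_sq_mul c t := by
    rcases eq_or_ne c 0 with rfl | hc
    · simp [MulChar.map_zero]
    · rw [map_mul, quadraticChar_sq_one' hc, MulChar.one_apply hc.isUnit]

lemma selfConv_quadraticChar_one (hF : ringChar F ≠ 2) :
    selfConv (quadraticChar F) 1 = -quadraticChar F (-1) := by
  rw [← jacobiSum_nontrivial_inv (quadraticChar_ne_one hF), (quadraticChar_isQuadratic F).inv]
  rfl

-- A fourth root of unity is a square only if `F` contains the eighth roots of unity.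
lemma quadraticChar_of_sq_eq_neg_one (hq : Fintype.card F % 8 = 5) {i : F} (hi : i ^ 2 = -1) :
    quadraticChar F i = -1 := by
  have hF := ringChar_ne_two_of_card_mod_eight hq
  have hi0 : i ≠ 0 := fun h0 => by simp [h0] at hi
  have hodd : Odd (Fintype.card F / 4) := Nat.odd_iff.2 (by omega)
  have hpow : i ^ (Fintype.card F / 2) = -1 := by
    rw [show Fintype.card F / 2 = 2 * (Fintype.card F / 4) by omega, pow_mul, hi, hodd.neg_one_pow]
  rw [quadraticChar_eq_pow_of_char_ne_two hF hi0, hpow,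
    if_neg (Ring.neg_one_ne_one_of_char_ne_two hF)]

variable {f : F → ℤ} {ψ : AddChar F R}

theorem charSum_quadraticChar_sq (hq : Fintype.card F % 8 = 5) (hψ : ∑ t, ψ t = 0) :
    charSum (quadraticChar F) ψ ^ 2 = Fintype.card F := by
  have hF := ringChar_ne_two_of_card_mod_eight hq
  obtain ⟨i, hi⟩ := exists_sq_eq_neg_one_of_card_mod_eight hq
  have hi0 : i ≠ 0 := fun h0 => by simp [h0] at hi
  rw [isEquivariantSign_quadraticChar.charSum_sq_eq hF hi (quadraticChar_sum_zero hF) hψ,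
    selfConv_quadraticChar_one hF, ← hi, quadraticChar_sq_one' hi0, MulChar.one_apply hi0.isUnit]
  simp

theorem IsEquivariantSign.charSum_sq_of_card_mod_eight (hq : Fintype.card F % 8 = 5)
    (hf : IsEquivariantSign (quadraticChar F) f) (hψ : ∑ t, ψ t = 0) :
    charSum f ψ ^ 2 = (selfConv f 1 - 1) * charSum (quadraticChar F) ψ - Fintype.card F := by
  have hF := ringChar_ne_two_of_card_mod_eight hq
  obtain ⟨i, hi⟩ := exists_sq_eq_neg_one_of_card_mod_eight hq
  rw [hf.charSum_sq_eq hF hi (hf.sum_eq_zero hF) hψ, quadraticChar_of_sq_eq_neg_one hq hi]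
  push_cast
  ring

theorem cast_sq_sub_card_mul_gaussCoeff_sq_eq_zero (hq : Fintype.card F % 8 = 5)
    (hf : IsEquivariantSign (quadraticChar F) f) (hψ : ∑ t, ψ t = 0) {σ τ : ℤ}
    (hσ : σ ^ 2 = 1) (hτ : τ ^ 2 = 1)
    (hrel : 2 * charSum f ψ + σ * charSum (quadraticChar F) ψ + τ = 0) :
    (((1 + 5 * Fintype.card F) ^ 2 - Fintype.card F * gaussCoeff f σ τ ^ 2 : ℤ) : R) = 0 := by
  have hE := hf.charSum_sq_of_card_mod_eight hq hψ
  have hC := charSum_quadraticChar_sq hq hψ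
  have hσR : (σ : R) ^ 2 = 1 := by exact_mod_cast congrArg (Int.cast (R := R)) hσ
  have hτR : (τ : R) ^ 2 = 1 := by exact_mod_cast congrArg (Int.cast (R := R)) hτ
  set E := charSum f ψ
  set C := charSum (quadraticChar F) ψ
  -- Compare `(2 E)² = (σ C + τ)²` with the two quadratic relations.
  have hlin : (gaussCoeff f σ τ : R) * C = 1 + 5 * Fintype.card F := by
    simp only [gaussCoeff]
    push_cast
    linear_combination (2 * E - σ * C - τ) * hrel - 4 * hE + hσR * C ^ 2 + hC + hτR
  push_cast
  rw [← hlin, ← hC]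
  ring

end FiniteField

lemma le_of_dvd_sq_sub_mul_sq {q g : ℕ} {k : ℤ} (hq : 1 < q) (hk : |k| ≤ 4 * q + 6)
    (hdvd : (g : ℤ) ∣ (1 + 5 * q) ^ 2 - q * k ^ 2) :
    g ≤ (1 + 2 * q) * (1 + 6 * q) * (1 + 8 * q) := by
  have hne : (1 + 5 * q : ℤ) ^ 2 - q * k ^ 2 ≠ 0 := by
    intro h
    have hq_dvd : (q : ℤ) ∣ 1 := ⟨k ^ 2 - 10 - 25 * q, by linear_combination h⟩
    exact hq.ne' (Nat.dvd_one.1 (by exact_mod_cast hq_dvd))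
  have hq0 : (0 : ℤ) ≤ q := by positivity
  have hk2 : k ^ 2 ≤ (4 * (q : ℤ) + 6) ^ 2 := sq_le_sq' (abs_le.1 hk).1 (abs_le.1 hk).2
  have hqk : (q : ℤ) * k ^ 2 ≤ q * (4 * (q : ℤ) + 6) ^ 2 := mul_le_mul_of_nonneg_left hk2 hq0
  have hqk0 : 0 ≤ (q : ℤ) * k ^ 2 := by positivity
  have hle : (g : ℤ) ≤ (1 + 2 * q) * (1 + 6 * q) * (1 + 8 * q) := by
    refine (Int.le_of_dvd (abs_pos.2 hne) ((dvd_abs _ _).2 hdvd)).trans (abs_le.2 ⟨?_, ?_⟩)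
    · nlinarith
    · nlinarith
  exact_mod_cast hle

section Cyclotomic

variable {p θ : ℕ}

/-- The binary sequence with support set `D_i ∪ D_{i+1}`, so that `s₁`, `s₃`, `s₄` are the cases
`i = 0, 1, 2`. -/
def adjacentSeq (p θ i : ℕ) (t : ℕ) : ℕ := if t ∈ cycD p θ i ∪ cycD p θ (i + 1) then 1 else 0

/-- The sign sequence `(-1)^s(t)` of a binary sequence `s`, with the value at `t = 0` replaced
by `0`. -/
def seqSign (p : ℕ) (s : ℕ → ℕ) (t : ZMod p) : ℤ := if t = 0 then 0 else 1 - 2 * s t.val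

lemma adjacentSeq_le_one (p θ i t : ℕ) : adjacentSeq p θ i t ≤ 1 := by
  unfold adjacentSeq
  split_ifs <;> simp

lemma seqCompl_le_one (s : ℕ → ℕ) (t : ℕ) : seqCompl s t ≤ 1 := Nat.sub_le 1 (s t)

lemma seqSign_seqCompl {s : ℕ → ℕ} (hs : ∀ t, s t ≤ 1) :
    seqSign p (seqCompl s) = -seqSign p s := by
  funext t
  simp only [seqSign, seqCompl, Pi.neg_apply, Nat.cast_sub (hs _), Nat.cast_one]
  split_ifs
  · rw [neg_zero]
  · ring

variable [Fact p.Prime]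

lemma zero_notMem_cycD (hθ : (θ : ZMod p) ≠ 0) (i : ℕ) : 0 ∉ cycD p θ i := by
  simp only [cycD, Finset.mem_image, not_exists, not_and]
  intro j _ h
  have hpow : ((θ ^ (i + 4 * j) : ℕ) : ZMod p) = 0 :=
    (ZMod.natCast_eq_zero_iff _ _).2 (Nat.dvd_of_mod_eq_zero h)
  exact pow_ne_zero (i + 4 * j) hθ (by exact_mod_cast hpow)

lemma val_pow_mem_cycD_iff (hp : 4 ∣ p - 1) (hθ : IsPrimitiveRoot (θ : ZMod p) (p - 1))
    {i k : ℕ} : ((θ : ZMod p) ^ k).val ∈ cycD p θ i ↔ k ≡ i [MOD 4] := by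
  obtain ⟨n, hn⟩ := hp
  have hp1 : 0 < p - 1 := Nat.sub_pos_of_lt (Fact.out : p.Prime).one_lt
  have hval : ∀ j, θ ^ j % p = ((θ : ZMod p) ^ j).val := fun j => by
    rw [← Nat.cast_pow, ZMod.val_natCast]
  have hpow : ∀ a b : ℕ, (θ : ZMod p) ^ a = θ ^ b ↔ a ≡ b [MOD p - 1] := fun a b => by
    rw [(hθ.isOfFinOrder hp1.ne').pow_eq_pow_iff_modEq, ← hθ.eq_orderOf]
  simp only [cycD, Finset.mem_image, Finset.mem_range, hval, (ZMod.val_injective p).eq_iff, hpow]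
  constructor
  · rintro ⟨j, -, h⟩
    have h4 := h.of_dvd ⟨n, hn⟩
    unfold Nat.ModEq at h4 ⊢
    omega
  · intro h
    obtain ⟨m, hm⟩ : ∃ m, k + i * (p - 1) = i + 4 * m :=
      ⟨(k + i * (p - 1) - i) / 4, by
        have hi : i ≤ i * (p - 1) := Nat.le_mul_of_pos_right i hp1
        have h4 : i * (p - 1) = 4 * (i * n) := by rw [hn]; ring
        unfold Nat.ModEq at h
        omega⟩
    refine ⟨m % n, ?_, ?_⟩
    · rw [hn, Nat.mul_div_cancel_left n (by norm_num)]
      exact Nat.mod_lt m (by omega)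
    · calc i + 4 * (m % n) ≡ i + 4 * m [MOD p - 1] := by
            rw [hn]; exact ((Nat.mod_modEq m n).mul_left' 4).add_left i
        _ ≡ k [MOD p - 1] := by rw [← hm]; simp [Nat.ModEq]

lemma exists_pow_eq_of_ne_zero (hθ : IsPrimitiveRoot (θ : ZMod p) (p - 1)) {t : ZMod p}
    (ht : t ≠ 0) : ∃ k : ℕ, (θ : ZMod p) ^ k = t := by
  have : NeZero (p - 1) := ⟨(Nat.sub_pos_of_lt (Fact.out : p.Prime).one_lt).ne'⟩
  obtain ⟨k, -, hk⟩ := hθ.eq_pow_of_pow_eq_one (ZMod.pow_card_sub_one_eq_one ht)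
  exact ⟨k, hk⟩

lemma quadraticChar_pow_of_isPrimitiveRoot (hp : p ≠ 2)
    (hθ : IsPrimitiveRoot (θ : ZMod p) (p - 1)) (k : ℕ) :
    quadraticChar (ZMod p) ((θ : ZMod p) ^ k) = (-1) ^ k := by
  have hp2 := (Fact.out : p.Prime).two_le
  have hF : ringChar (ZMod p) ≠ 2 := by rwa [ZMod.ringChar_zmod_n]
  rw [map_pow, quadraticChar_eq_pow_of_char_ne_two hF (hθ.ne_zero (by omega)), ZMod.card, if_neg]
  exact hθ.pow_ne_one_of_pos_of_lt (by omega) (by omega)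

lemma adjacentSeq_zero (hθ : (θ : ZMod p) ≠ 0) (i : ℕ) : adjacentSeq p θ i 0 = 0 := by
  simp [adjacentSeq, zero_notMem_cycD hθ]

lemma seqSign_adjacentSeq_pow (hp : 4 ∣ p - 1) (hθ : IsPrimitiveRoot (θ : ZMod p) (p - 1))
    (i k : ℕ) : seqSign p (adjacentSeq p θ i) ((θ : ZMod p) ^ k) =
      if k ≡ i [MOD 4] ∨ k ≡ i + 1 [MOD 4] then -1 else 1 := by
  have hp1 : p - 1 ≠ 0 := (Nat.sub_pos_of_lt (Fact.out : p.Prime).one_lt).ne'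
  rw [seqSign, if_neg (pow_ne_zero k (hθ.ne_zero hp1))]
  simp only [adjacentSeq, Finset.mem_union, val_pow_mem_cycD_iff hp hθ]
  split_ifs <;> norm_num

lemma isEquivariantSign_adjacentSeq (hp : 4 ∣ p - 1)
    (hθ : IsPrimitiveRoot (θ : ZMod p) (p - 1)) (i : ℕ) :
    IsEquivariantSign (quadraticChar (ZMod p)) (seqSign p (adjacentSeq p θ i)) where
  sq_eq_one t ht := by
    obtain ⟨k, rfl⟩ := exists_pow_eq_of_ne_zero hθ ht
    rw [seqSign_adjacentSeq_pow hp hθ]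
    split_ifs <;> rfl
  map_sq_mul c t := by
    rcases eq_or_ne c 0 with rfl | hc
    · simp [seqSign]
    rcases eq_or_ne t 0 with rfl | ht
    · simp [seqSign]
    obtain ⟨a, rfl⟩ := exists_pow_eq_of_ne_zero hθ hc
    obtain ⟨k, rfl⟩ := exists_pow_eq_of_ne_zero hθ ht
    rw [← pow_mul, ← pow_add, quadraticChar_pow_of_isPrimitiveRoot (by omega) hθ,
      seqSign_adjacentSeq_pow hp hθ, seqSign_adjacentSeq_pow hp hθ]
    unfold Nat.ModEq
    rcases a.even_or_odd with ha | ha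
    · rw [ha.neg_one_pow, one_mul]
      have := Nat.even_iff.1 ha
      split_ifs <;> first | rfl | omega
    · rw [ha.neg_one_pow]
      have := Nat.odd_iff.1 ha
      split_ifs <;> first | rfl | omega

lemma seqSign_adjacentSeq_mul_succ (hp : 4 ∣ p - 1) (hθ : IsPrimitiveRoot (θ : ZMod p) (p - 1))
    (i : ℕ) (t : ZMod p) :
    seqSign p (adjacentSeq p θ i) t * seqSign p (adjacentSeq p θ (i + 1)) t =
      (-1) ^ (i + 1) * quadraticChar (ZMod p) t := by
  rcases eq_or_ne t 0 with rfl | ht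
  · simp [seqSign]
  obtain ⟨k, rfl⟩ := exists_pow_eq_of_ne_zero hθ ht
  rw [quadraticChar_pow_of_isPrimitiveRoot (by omega) hθ, seqSign_adjacentSeq_pow hp hθ,
    seqSign_adjacentSeq_pow hp hθ, ← pow_add]
  unfold Nat.ModEq
  rcases (i + 1 + k).even_or_odd with h | h
  · rw [h.neg_one_pow]
    have := Nat.even_iff.1 h
    split_ifs <;> first | rfl | omega
  · rw [h.neg_one_pow]
    have := Nat.odd_iff.1 h
    split_ifs <;> first | rfl | omega

end Cyclotomic

section QuaternarySequence

variable {R : Type*} [CommRing R] {p : ℕ}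

lemma floor_logb_le_adicComplexity4 {u : ℕ → ℕ} {B : ℝ} (hp : p ≠ 0)
    (hB : (Nat.gcd (4 ^ p - 1) (seqVal p u) : ℝ) ≤ B) :
    ⌊Real.logb 4 ((4 ^ p - 1 : ℕ) / B + 1)⌋ ≤ adicComplexity4 p u := by
  have hN : 0 < 4 ^ p - 1 := Nat.sub_pos_of_lt (Nat.one_lt_pow hp (by norm_num))
  have hg : (0 : ℝ) < Nat.gcd (4 ^ p - 1) (seqVal p u) := by
    exact_mod_cast Nat.gcd_pos_of_pos_left _ hN
  have hB0 : 0 < B := hg.trans_le hB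
  refine Int.floor_le_floor (Real.logb_le_logb_of_le (by norm_num) (by positivity) ?_)
  gcongr

lemma sum_zmodChar_four_eq_zero [NeZero p] {g : ℕ} (hg : Nat.Coprime 3 g)
    (h4 : (4 : ZMod g) ^ p = 1) : ∑ t, AddChar.zmodChar p h4 t = 0 := by
  have h3 : IsUnit (3 : ZMod g) := by exact_mod_cast (ZMod.isUnit_iff_coprime 3 g).2 hg
  have hψ : AddChar.zmodChar p h4 1 - 1 = 3 := by
    rw [← Nat.cast_one, AddChar.zmodChar_apply']
    norm_num
  exact sum_addChar_eq_zero_of_isUnit_sub_one (hψ ▸ h3)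

-- With `A = (-1)^a` and `B = (-1)^b` the inverse Gray mapping is `φ[a,b] = (3 - 2 A - A B) / 2`.
lemma two_mul_gray {a b : ℕ} (ha : a ≤ 1) (hb : b ≤ 1) :
    2 * (gray a b : ℤ) = 3 - 2 * (1 - 2 * a) - (1 - 2 * a) * (1 - 2 * b) := by
  interval_cases a <;> interval_cases b <;> rfl

lemma cast_seqVal [NeZero p] (u : ℕ → ℕ) (h4 : (4 : R) ^ p = 1) :
    (seqVal p u : R) = charSum (fun t => (u t.val : ℤ)) (AddChar.zmodChar p h4) := by
  simp only [seqVal, charSum, Nat.cast_sum, Nat.cast_mul, Nat.cast_pow, Nat.cast_ofNat,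
    AddChar.zmodChar_apply, Int.cast_natCast]
  refine Finset.sum_nbij' (fun n => (n : ZMod p)) ZMod.val (by simp) ?_ ?_ (by simp) ?_
  · intro t _
    exact Finset.mem_range.2 t.val_lt
  · intro n hn
    exact ZMod.val_cast_of_lt (Finset.mem_range.1 hn)
  · intro n hn
    rw [ZMod.val_cast_of_lt (Finset.mem_range.1 hn)]

variable [Fact p.Prime] {r s : ℕ → ℕ} {σ : ℤˣ}

lemma two_mul_charSum_graySeq (hr1 : ∀ t, r t ≤ 1) (hs1 : ∀ t, s t ≤ 1) (hs0 : s 0 = 1)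
    (hrs : ∀ t, seqSign p r t * seqSign p s t = σ * quadraticChar (ZMod p) t)
    (ψ : AddChar (ZMod p) R) :
    2 * charSum (fun t => (graySeq r s t.val : ℤ)) ψ = 3 * ∑ t, ψ t
      - (2 * charSum (seqSign p r) ψ + σ * charSum (quadraticChar (ZMod p)) ψ
        + (1 - 2 * r 0 : ℤ)) := by
  have hterm : ∀ t : ZMod p, 2 * (graySeq r s t.val : ℤ) = 3 - 2 * seqSign p r t
      - σ * quadraticChar (ZMod p) t - if t = 0 then 1 - 2 * (r 0 : ℤ) else 0 := by
    intro t
    rw [graySeq, two_mul_gray (hr1 _) (hs1 _), ← hrs]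
    by_cases ht : t = 0
    · simp only [ht, seqSign, if_true, ZMod.val_zero, hs0]
      ring
    · simp only [seqSign, if_neg ht]
      ring
  have htermψ : ∀ t : ZMod p, 2 * (((graySeq r s t.val : ℤ) : R) * ψ t) = 3 * ψ t
      - 2 * (seqSign p r t * ψ t) - σ * (quadraticChar (ZMod p) t * ψ t)
      - if t = 0 then ((1 - 2 * r 0 : ℤ) : R) * ψ t else 0 := by
    intro t
    rw [← mul_assoc, ← Int.cast_two, ← Int.cast_mul, hterm t]
    split_ifs <;> push_cast <;> ring
  simp only [charSum]
  rw [Finset.mul_sum, Finset.sum_congr rfl fun t _ => htermψ t]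
  simp only [Finset.sum_sub_distrib, ← Finset.mul_sum, Finset.sum_ite_eq', Finset.mem_univ,
    if_true, AddChar.map_zero_eq_one]
  ring

-- Modulo `3` the base `4` is `1`, so `4 ^ t` becomes the trivial character.
lemma coprime_three_seqVal_graySeq (hp8 : p % 8 = 5) (hr1 : ∀ t, r t ≤ 1) (hs1 : ∀ t, s t ≤ 1)
    (hs0 : s 0 = 1) (hr : IsEquivariantSign (quadraticChar (ZMod p)) (seqSign p r))
    (hrs : ∀ t, seqSign p r t * seqSign p s t = σ * quadraticChar (ZMod p) t) :
    Nat.Coprime 3 (seqVal p (graySeq r s)) := by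
  rw [Nat.Prime.coprime_iff_not_dvd Nat.prime_three, ← ZMod.natCast_eq_zero_iff]
  intro h0
  have hF : ringChar (ZMod p) ≠ 2 := ringChar_ne_two_of_card_mod_eight (by rwa [ZMod.card])
  have h4 : (4 : ZMod 3) ^ p = 1 := by rw [show (4 : ZMod 3) = 1 by rfl, one_pow]
  have hψ : AddChar.zmodChar p h4 = 1 := by
    ext t
    rw [AddChar.zmodChar_apply, show (4 : ZMod 3) = 1 by rfl, one_pow, AddChar.one_apply]
  have hgray := two_mul_charSum_graySeq hr1 hs1 hs0 hrs (1 : AddChar (ZMod p) (ZMod 3))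
  rw [← hψ, ← cast_seqVal, h0, hψ, charSum_one, charSum_one, hr.sum_eq_zero hF,
    quadraticChar_sum_zero hF, show (3 : ZMod 3) = 0 by rfl] at hgray
  have hr0 := hr1 0
  interval_cases r 0 <;> simp at hgray

theorem gcd_seqVal_graySeq_le (hp8 : p % 8 = 5) (hr1 : ∀ t, r t ≤ 1) (hs1 : ∀ t, s t ≤ 1)
    (hs0 : s 0 = 1) (hr : IsEquivariantSign (quadraticChar (ZMod p)) (seqSign p r))
    (hrs : ∀ t, seqSign p r t * seqSign p s t = σ * quadraticChar (ZMod p) t) :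
    Nat.gcd (4 ^ p - 1) (seqVal p (graySeq r s)) ≤
      (1 + 2 * p) * (1 + 6 * p) * (1 + 8 * p) := by
  set g := Nat.gcd (4 ^ p - 1) (seqVal p (graySeq r s))
  have hcard : Fintype.card (ZMod p) % 8 = 5 := by rwa [ZMod.card]
  have h4 : (4 : ZMod g) ^ p = 1 := by
    have h : ((4 ^ p - 1 : ℕ) : ZMod g) = 0 :=
      (ZMod.natCast_eq_zero_iff _ _).2 (Nat.gcd_dvd_left _ _)
    rw [Nat.cast_sub (Nat.one_le_pow _ _ (by norm_num)), sub_eq_zero] at h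
    exact_mod_cast h
  have hψ : ∑ t, AddChar.zmodChar p h4 t = 0 :=
    sum_zmodChar_four_eq_zero (Nat.Coprime.coprime_dvd_right (Nat.gcd_dvd_right _ _)
      (coprime_three_seqVal_graySeq hp8 hr1 hs1 hs0 hr hrs)) h4
  have hval : (seqVal p (graySeq r s) : ZMod g) = 0 :=
    (ZMod.natCast_eq_zero_iff _ _).2 (Nat.gcd_dvd_right _ _)
  have hrel := two_mul_charSum_graySeq hr1 hs1 hs0 hrs (AddChar.zmodChar p h4)
  rw [← cast_seqVal, hval, hψ, mul_zero, mul_zero, zero_sub, zero_eq_neg] at hrel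
  have hσ : (σ : ℤ) ^ 2 = 1 := by rw [← Units.val_pow_eq_pow_val, Int.units_sq, Units.val_one]
  have hτ : (1 - 2 * r 0 : ℤ) ^ 2 = 1 := by
    have hr0 := hr1 0
    interval_cases r 0 <;> rfl
  have hdvd := (ZMod.intCast_zmod_eq_zero_iff_dvd _ g).1
    (cast_sq_sub_card_mul_gaussCoeff_sq_eq_zero hcard hr hψ hσ hτ hrel)
  have hk := hr.abs_gaussCoeff_le hσ hτ
  rw [ZMod.card] at hdvd hk
  exact le_of_dvd_sq_sub_mul_sq (Fact.out : p.Prime).one_lt hk hdvd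

theorem floor_logb_le_adicComplexity4_graySeq (hp8 : p % 8 = 5)
    (hr1 : ∀ t, r t ≤ 1) (hs1 : ∀ t, s t ≤ 1) (hs0 : s 0 = 1)
    (hr : IsEquivariantSign (quadraticChar (ZMod p)) (seqSign p r))
    (hrs : ∀ t, seqSign p r t * seqSign p s t = σ * quadraticChar (ZMod p) t) :
    ⌊Real.logb 4 ((4 ^ p - 1 : ℕ) / ((1 + 2 * p) * (1 + 6 * p) * (1 + 8 * p)) + 1)⌋ ≤
      adicComplexity4 p (graySeq r s) :=
  floor_logb_le_adicComplexity4 (by omega) (by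
    exact_mod_cast gcd_seqVal_graySeq_le hp8 hr1 hs1 hs0 hr hrs)

end QuaternarySequence

theorem theorem8_general {p θ : ℕ} [Fact p.Prime] (hp8 : p % 8 = 5)
    (hθ : IsPrimitiveRoot (θ : ZMod p) (p - 1)) (i : ℕ) :
    ⌊Real.logb 4 ((4 ^ p - 1 : ℕ) / ((1 + 2 * p) * (1 + 6 * p) * (1 + 8 * p)) + 1)⌋ ≤
      adicComplexity4 p (graySeq (adjacentSeq p θ i) (seqCompl (adjacentSeq p θ (i + 1)))) ∧
    ⌊Real.logb 4 ((4 ^ p - 1 : ℕ) / ((1 + 2 * p) * (1 + 6 * p) * (1 + 8 * p)) + 1)⌋ ≤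
      adicComplexity4 p
        (graySeq (seqCompl (adjacentSeq p θ i)) (seqCompl (adjacentSeq p θ (i + 1)))) := by
  have h4 : 4 ∣ p - 1 := by omega
  have hr := isEquivariantSign_adjacentSeq h4 hθ i
  have hrs := seqSign_adjacentSeq_mul_succ h4 hθ i
  have hcompl := fun i => seqSign_seqCompl (p := p) (adjacentSeq_le_one p θ i)
  have hs0 : seqCompl (adjacentSeq p θ (i + 1)) 0 = 1 := by
    rw [seqCompl, adjacentSeq_zero (hθ.ne_zero (by omega))]
  constructor
  · refine floor_logb_le_adicComplexity4_graySeq hp8 (σ := (-1) ^ i) (adjacentSeq_le_one p θ i)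
      (seqCompl_le_one _) hs0 hr fun t => ?_
    rw [hcompl, Pi.neg_apply, mul_neg, hrs]
    push_cast
    ring
  · refine floor_logb_le_adicComplexity4_graySeq hp8 (σ := (-1) ^ (i + 1)) (seqCompl_le_one _)
      (seqCompl_le_one _) hs0 (hcompl i ▸ hr.neg) fun t => ?_
    rw [hcompl, hcompl, Pi.neg_apply, Pi.neg_apply, neg_mul_neg, hrs]
    push_cast
    rfl

theorem theorem8
    (p : ℕ) (hp : p.Prime) (hp8 : p % 8 = 5)
    (x y : ℤ) (hx : x % 4 = 1) (hxy : (p : ℤ) = x ^ 2 + 4 * y ^ 2)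
    (θ : ℕ) (hθ : IsPrimitiveRoot (θ : ZMod p) (p - 1))
    (hy : 16 * (((cycD p θ 0).filter (fun a => (a + 1) % p ∈ cycD p θ 1)).card : ℤ)
        = (p : ℤ) + 1 + 2 * x - 8 * y)
    :
    ⌊Real.logb 4 (((4 ^ p - 1 : ℕ) : ℝ) / (((1 + 2 * (p : ℝ)) * (1 + 6 * (p : ℝ)) * (1 + 8 * (p : ℝ)))) + 1)⌋ ≤
      adicComplexity4 p (graySeq (seqS1 p θ) (seqCompl (seqS3 p θ))) ∧
    ⌊Real.logb 4 (((4 ^ p - 1 : ℕ) : ℝ) / (((1 + 2 * (p : ℝ)) * (1 + 6 * (p : ℝ)) * (1 + 8 * (p : ℝ)))) + 1)⌋ ≤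
      adicComplexity4 p (graySeq (seqS3 p θ) (seqCompl (seqS4 p θ))) ∧
    ⌊Real.logb 4 (((4 ^ p - 1 : ℕ) : ℝ) / (((1 + 2 * (p : ℝ)) * (1 + 6 * (p : ℝ)) * (1 + 8 * (p : ℝ)))) + 1)⌋ ≤
      adicComplexity4 p (graySeq (seqCompl (seqS1 p θ)) (seqCompl (seqS3 p θ))) := by
  have := Fact.mk hp
  exact ⟨(theorem8_general hp8 hθ 0).1, (theorem8_general hp8 hθ 1).1,
    (theorem8_general hp8 hθ 0).2⟩
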